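/- Let F ⊆ ℤ² be a cluster, T an F-tiling, and α an integer with gcd(α, |F|) = 1. Then T is also an (αF)-tiling, where αF = {α·a : a ∈ F}. -/

import Mathlib

/-!
Let `F` act on functions on the group by `C φ x = ∑ a ∈ F, φ (x - a)`. In terms of the indicator
function `1_T`, the translates `T + a` with `a ∈ F` tile if and only if `C 1_T = 1`.

Let `p` be a prime not dividing `|F|` and work modulo `p`. Since `C 1 = |F|`, iterating gives
`C ^ p 1_T = |F| ^ (p - 1) = 1`. As `C` is a sum of commuting translations, Frobenius shows that
`C ^ p` is the sum of the translations by the vectors `p • a`. Hence the translates of `T` by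
`p • F` cover the group. Let `N x ≥ 1` be the number of them that contain `x`. Double counting
against the tiling by `F` gives `∑ a ∈ F, N (x - a) = |p • F| ≤ |F|`, so `N = 1` everywhere.

The same averaging shows that the translates by `-F` tile: they are disjoint, because disjointness
only says that `T - T` and `F - F` meet in `0`. A nonzero dilation factor is a product of primes
and a sign, and the factor `0` forces `|F| = 1`.
-/

/-- `T` is a tiling of `ℤ²` by translates of the cluster `F`. -/
def IsTiling (F : Finset (ℤ × ℤ)) (T : Set (ℤ × ℤ)) : Prop :=
  ∀ p : ℤ × ℤ, ∃! tv : (ℤ × ℤ) × (ℤ × ℤ), tv.1 ∈ T ∧ tv.2 ∈ F ∧ p = tv.1 + tv.2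

section Dilation

open AddSubgroup (IsComplement)
open Finset

theorem sum_pow_char_of_commute {ι R : Type*} [Semiring R] (p : ℕ) [Fact p.Prime] [CharP R p]
    (s : Finset ι) (f : ι → R) (hf : (s : Set ι).Pairwise fun i j => Commute (f i) (f j)) :
    (∑ i ∈ s, f i) ^ p = ∑ i ∈ s, f i ^ p := by
  classical
  induction s using Finset.induction_on with
  | empty => simp [(Fact.out : p.Prime).ne_zero]
  | insert i s hi ih =>
    rw [coe_insert, Set.pairwise_insert_of_notMem hi] at hf
    rw [sum_insert hi, sum_insert hi, ← ih hf.1]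
    exact add_pow_char_of_commute _ (.sum_right _ _ _ fun j hj => (hf.2 j hj).1)

section AddGroup

variable {G : Type*} [AddGroup G] {F : Finset G} {T : Set G}

theorem isComplement_iff_existsUnique_prod {S T : Set G} :
    IsComplement S T ↔ ∀ g, ∃! st : G × G, st.1 ∈ S ∧ st.2 ∈ T ∧ g = st.1 + st.2 := by
  refine AddSubgroup.isComplement_iff_existsUnique.trans (forall_congr' fun g => ?_)
  constructor
  · rintro ⟨⟨s, t⟩, hst, huniq⟩
    refine ⟨(s, t), ⟨s.2, t.2, hst.symm⟩, fun ⟨s', t'⟩ ⟨hs', ht', hst'⟩ => ?_⟩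
    exact congrArg (Prod.map Subtype.val Subtype.val) (huniq (⟨s', hs'⟩, ⟨t', ht'⟩) hst'.symm)
  · rintro ⟨⟨s, t⟩, ⟨hs, ht, hst⟩, huniq⟩
    refine ⟨(⟨s, hs⟩, ⟨t, ht⟩), hst.symm, fun ⟨s', t'⟩ hst' => ?_⟩
    exact Subtype.val_injective.prodMap Subtype.val_injective
      (huniq (s', t') ⟨s'.2, t'.2, hst'.symm⟩)

open Classical in
/-- The number of translates `T + a`, for `a ∈ F`, that contain `x`. -/
noncomputable def coverCount (T : Set G) (F : Finset G) (x : G) : ℕ :=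
  #{a ∈ F | x - a ∈ T}

theorem one_le_coverCount {x : G} : 1 ≤ coverCount T F x ↔ ∃ a ∈ F, x - a ∈ T := by
  simp only [coverCount, one_le_card, filter_nonempty_iff]

theorem cast_coverCount (R : Type*) [NonAssocSemiring R] (T : Set G) (F : Finset G) (x : G) :
    (coverCount T F x : R) = ∑ a ∈ F, T.indicator 1 (x - a) := by
  classical
  simp only [coverCount, Set.indicator_apply, Pi.one_apply, sum_boole]

theorem isComplement_iff_coverCount_eq_one : IsComplement T F ↔ ∀ x, coverCount T F x = 1 := by
  simp only [AddSubgroup.isComplement_iff_existsUnique_add_neg_mem, ← sub_eq_add_neg, coverCount,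
    card_eq_one_iff_existsUnique, mem_filter, ExistsUnique, Subtype.exists, Subtype.forall,
    Subtype.mk.injEq, mem_coe, exists_prop, and_imp, and_assoc]

end AddGroup

variable {G : Type*} [AddCommGroup G] {F F' : Finset G} {T : Set G}

theorem sum_coverCount_sub_comm (T : Set G) (F F' : Finset G) (x : G) :
    ∑ a ∈ F, coverCount T F' (x - a) = ∑ b ∈ F', coverCount T F (x - b) := by
  classical
  simp only [coverCount, card_filter]
  rw [sum_comm]
  simp only [sub_right_comm]

theorem sum_coverCount_sub_of_isComplement (h : IsComplement T F) (F' : Finset G) (x : G) :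
    ∑ a ∈ F, coverCount T F' (x - a) = #F' := by
  simp only [sum_coverCount_sub_comm T F F', isComplement_iff_coverCount_eq_one.1 h,
    card_eq_sum_ones]

theorem card_eq_of_isComplement (h : IsComplement T F) (h' : IsComplement T F') : #F = #F' := by
  simpa only [isComplement_iff_coverCount_eq_one.1 h', card_eq_sum_ones] using
    sum_coverCount_sub_of_isComplement h F' 0

theorem isComplement_of_one_le_coverCount (h : IsComplement T F) (hcard : #F' ≤ #F)
    (hcover : ∀ x, 1 ≤ coverCount T F' x) : IsComplement T F' := by
  rw [isComplement_iff_coverCount_eq_one]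
  intro x
  obtain ⟨a, ha⟩ := h.nonempty_right
  have hle : ∑ b ∈ F, coverCount T F' (x + a - b) ≤ ∑ _b ∈ F, 1 := by
    rwa [sum_coverCount_sub_of_isComplement h, ← card_eq_sum_ones]
  have heq := (sum_eq_sum_iff_of_le fun b _ => hcover (x + a - b)).1
    ((sum_le_sum fun b _ => hcover (x + a - b)).antisymm hle) a ha
  rw [heq, add_sub_cancel_right]

theorem isComplement_of_coverCount_le_one (h : IsComplement T F) (hcard : #F ≤ #F')
    (hpack : ∀ x, coverCount T F' x ≤ 1) : IsComplement T F' := by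
  rw [isComplement_iff_coverCount_eq_one]
  intro x
  obtain ⟨a, ha⟩ := h.nonempty_right
  have hge : ∑ _b ∈ F, 1 ≤ ∑ b ∈ F, coverCount T F' (x + a - b) := by
    rwa [sum_coverCount_sub_of_isComplement h, ← card_eq_sum_ones]
  have heq := (sum_eq_sum_iff_of_le fun b _ => hpack (x + a - b)).1
    ((sum_le_sum fun b _ => hpack (x + a - b)).antisymm hge) a ha
  rw [← heq, add_sub_cancel_right]

theorem isComplement_image_neg [DecidableEq G] (h : IsComplement T F) :
    IsComplement T (F.image (- ·)) := by
  refine isComplement_of_coverCount_le_one h (card_image_of_injective F neg_injective).ge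
    fun x => card_le_one.2 ?_
  simp only [mem_filter, mem_image]
  rintro _ ⟨⟨a, ha, rfl⟩, hxa⟩ _ ⟨⟨b, hb, rfl⟩, hxb⟩
  rw [sub_neg_eq_add] at hxa hxb
  have hba : ((⟨x + a, hxa⟩, ⟨b, hb⟩) : T × (F : Set G)) = (⟨x + b, hxb⟩, ⟨a, ha⟩) :=
    h.1 (add_right_comm x a b)
  exact congrArg (fun y => -(y.2 : G)) hba.symm

/-- Translation by `a` as a linear endomorphism of the functions on `G`: the bundled form of
`translate`. -/
def translateEnd (R : Type*) [Semiring R] (a : G) : Module.End R (G → R) :=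
  LinearMap.funLeft R R (· - a)

section translateEnd

variable {R : Type*} [Semiring R]

theorem translateEnd_apply (a : G) (φ : G → R) (x : G) : translateEnd R a φ x = φ (x - a) :=
  rfl

theorem translateEnd_mul (a b : G) :
    translateEnd R a * translateEnd R b = translateEnd R (a + b) := by
  ext
  simp [translateEnd_apply, sub_sub]

theorem translateEnd_pow (a : G) (n : ℕ) : translateEnd R a ^ n = translateEnd R (n • a) := by
  induction n with
  | zero => ext; simp [translateEnd_apply]
  | succ n ih => rw [pow_succ, ih, translateEnd_mul, succ_nsmul]

theorem commute_translateEnd (a b : G) : Commute (translateEnd R a) (translateEnd R b) := by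
  rw [commute_iff_eq, translateEnd_mul, translateEnd_mul, add_comm]

theorem sum_translateEnd_apply (F : Finset G) (φ : G → R) (x : G) :
    (∑ a ∈ F, translateEnd R a) φ x = ∑ a ∈ F, φ (x - a) := by
  simp only [LinearMap.sum_apply, Finset.sum_apply, translateEnd_apply]

theorem sum_translateEnd_pow_one (F : Finset G) (n : ℕ) :
    ((∑ a ∈ F, translateEnd R a) ^ n) 1 = (#F : G → R) ^ n := by
  induction n with
  | zero => simp
  | succ n ih =>
    ext x
    rw [pow_succ', Module.End.mul_apply, ih, sum_translateEnd_apply]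
    simp [pow_succ']

theorem sum_translateEnd_indicator (h : IsComplement T F) :
    (∑ a ∈ F, translateEnd R a) (T.indicator 1) = 1 := by
  ext x
  rw [sum_translateEnd_apply, ← cast_coverCount, isComplement_iff_coverCount_eq_one.1 h,
    Nat.cast_one, Pi.one_apply]

end translateEnd

theorem sum_indicator_sub_nsmul_eq_one {p : ℕ} [Fact p.Prime] (h : IsComplement T F)
    (hp : p.Coprime #F) (x : G) :
    ∑ a ∈ F, T.indicator (1 : G → ZMod p) (x - p • a) = 1 := by
  have hchar : CharP (Module.End (ZMod p) (G → ZMod p)) p :=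
    charP_of_injective_algebraMap' (ZMod p) p
  have hcard : (#F : ZMod p) ≠ 0 := by
    rwa [Ne, ZMod.natCast_eq_zero_iff, ← Nat.Prime.coprime_iff_not_dvd Fact.out]
  set C := ∑ a ∈ F, translateEnd (ZMod p) a with hC
  have hfrobenius : C ^ p = ∑ a ∈ F, translateEnd (ZMod p) (p • a) := by
    simp only [hC, sum_pow_char_of_commute p F _ fun a _ b _ _ => commute_translateEnd a b,
      translateEnd_pow]
  calc ∑ a ∈ F, T.indicator (1 : G → ZMod p) (x - p • a)
    _ = (C ^ p) (T.indicator 1) x := by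
      simp only [hfrobenius, LinearMap.sum_apply, Finset.sum_apply, translateEnd_apply]
    _ = (C ^ (p - 1)) 1 x := by
      rw [← pow_sub_one_mul (NeZero.ne p), Module.End.mul_apply, sum_translateEnd_indicator h]
    _ = (#F : ZMod p) ^ (p - 1) := by
      rw [sum_translateEnd_pow_one, Pi.pow_apply, Pi.natCast_apply]
    _ = 1 := ZMod.pow_card_sub_one_eq_one hcard

variable [DecidableEq G]

theorem isComplement_image_prime_nsmul {p : ℕ} (h : IsComplement T F) (hp : p.Prime)
    (hpF : p.Coprime #F) : IsComplement T (F.image (p • ·)) := by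
  have : Fact p.Prime := ⟨hp⟩
  refine isComplement_of_one_le_coverCount h card_image_le fun x => one_le_coverCount.2 ?_
  obtain ⟨a, ha, hxa⟩ : ∃ a ∈ F, T.indicator (1 : G → ZMod p) (x - p • a) ≠ 0 :=
    exists_ne_zero_of_sum_ne_zero (by simp [sum_indicator_sub_nsmul_eq_one h hpF x])
  exact ⟨p • a, mem_image_of_mem _ ha, Set.mem_of_indicator_ne_zero hxa⟩

theorem isComplement_image_nsmul {n : ℕ} (h : IsComplement T F) (hn : n.Coprime #F) :
    IsComplement T (F.image (n • ·)) := by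
  induction n using induction_on_primes with
  | zero =>
    obtain ⟨a, rfl⟩ := card_eq_one.1 (Nat.coprime_zero_left _ |>.1 hn)
    rw [coe_singleton, AddSubgroup.isComplement_singleton_right] at h
    simpa using AddSubgroup.isComplement_singleton_right.2 h
  | one => simpa using h
  | prime_mul p n hp ih =>
    have hn' : IsComplement T (F.image (n • ·)) := ih hn.coprime_mul_left
    have hp' := hn.coprime_mul_right
    rw [card_eq_of_isComplement h hn'] at hp'
    simpa only [image_image, Function.comp_def, mul_smul] using
      isComplement_image_prime_nsmul hn' hp hp'

theorem stmt19_general {α : ℤ} (h : IsComplement T F) (hα : Int.gcd α #F = 1) :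
    IsComplement T (F.image (α • ·)) := by
  have hn : IsComplement T (F.image (α.natAbs • ·)) := isComplement_image_nsmul h hα
  rcases Int.natAbs_eq α with hα' | hα' <;> rw [hα']
  · simpa only [natCast_zsmul] using hn
  · simpa only [image_image, Function.comp_def, neg_smul, natCast_zsmul] using
      isComplement_image_neg hn

theorem isTiling_iff_isComplement {F : Finset (ℤ × ℤ)} {T : Set (ℤ × ℤ)} :
    IsTiling F T ↔ IsComplement T F :=
  isComplement_iff_existsUnique_prod.symm

end Dilation

/-- **Dilation Lemma.** If `T` is an `F`-tiling and `α` is an integer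
coprime to `|F|`, then `T` is also an `αF`-tiling. -/
theorem stmt19 (F : Finset (ℤ × ℤ)) (hF : F.Nonempty) (T : Set (ℤ × ℤ))
    (hT : IsTiling F T) (α : ℤ) (hα : Int.gcd α (F.card : ℤ) = 1) :
    IsTiling (F.image fun a => (α * a.1, α * a.2)) T :=
  isTiling_iff_isComplement.2 (stmt19_general (isTiling_iff_isComplement.1 hT) hα)
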